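/- arXiv:1312.2890 — 2 statements merged into one kernel-verified Lean document; each statement's English description precedes it below -/
import Mathlib

section
/- For a > 0 and any real t₀, (1/(2π)) ∫_{-∞}^{∞} [ cosh(a+it)/(a + i(t - t₀)) + cosh(a-it)/(a - i(t - t₀)) ] dt = cos t₀, i.e., the contour-integral reconstruction formula recovers cosh(i t₀) = cos t₀. -/
/-!
On the line `z = a + it` the two summands are `cosh z / (z - i t₀)` and, after `t ↦ -t`,
`cosh z / (z + i t₀)`, so everything reduces to the limits of `∫ exp (ε z) / (z - i u)` for
`ε = 1` and `ε = -1`. These integrals converge only conditionally. One integration by parts replaces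
the kernel by the absolutely integrable `1 / (z - i u) ^ 2`, up to boundary terms tending to `0`
(`tendsto_exp_div`). Now `1 / (a + 2 π i w) ^ 2` is the Fourier transform of the continuous
integrable function `x ↦ max x 0 * exp (-a x)` (`fourier_ramp`), so Fourier inversion evaluates the
remaining integral (`integral_exp_div_sq`). That function vanishes at `-1`, hence only the
half `exp z / 2` of `cosh z` contributes, and after division by `2 π` the two summands yield
`exp (i t₀) / 2` and `exp (-i t₀) / 2`.
-/

open Complex Real Filter

open MeasureTheory Set FourierTransform

/-- The damped ramp `x ↦ max x 0 * exp (-a x)`, complex-valued; for `a > 0` it is the inverse Fourier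
transform of `w ↦ 1 / (a + 2 π i w) ^ 2`. -/
noncomputable def ramp (a : ℝ) (x : ℝ) : ℂ := ((max x 0 * Real.exp (-a * x) : ℝ) : ℂ)

lemma ramp_continuous (a : ℝ) : Continuous (ramp a) := by
  unfold ramp; fun_prop

lemma ramp_eq_indicator (a : ℝ) :
    ramp a = (Ioi (0 : ℝ)).indicator (fun x : ℝ => (x : ℂ) * cexp (-(a * x))) := by
  funext x
  by_cases hx : 0 < x
  · simp [ramp, indicator, hx, max_eq_left hx.le]
  · simp [ramp, indicator, hx, max_eq_right (not_lt.mp hx)]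

lemma integrableOn_mul_cexp {c : ℂ} (hc : 0 < c.re) :
    IntegrableOn (fun x : ℝ => (x : ℂ) * cexp (-(c * x))) (Ioi 0) := by
  have h := integrableOn_rpow_mul_exp_neg_mul_rpow (s := 1) (p := 1) (by norm_num) one_pos hc
  refine Integrable.mono' h (by fun_prop) ?_
  filter_upwards [ae_restrict_mem measurableSet_Ioi] with x hx
  have hx : 0 < x := hx
  simp [Complex.norm_exp, abs_of_pos hx]

lemma integral_mul_cexp {c : ℂ} (hc : 0 < c.re) :
    ∫ x in Ioi (0 : ℝ), (x : ℂ) * cexp (-(c * x)) = 1 / c ^ 2 := by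
  have hc0 : c ≠ 0 := by rintro rfl; simp at hc
  have hd : ∀ x ∈ Ici (0 : ℝ), HasDerivAt
      (fun x : ℝ => -((x : ℂ) / c + 1 / c ^ 2) * cexp (-(c * x)))
      ((x : ℂ) * cexp (-(c * x))) x := by
    intro x _
    have h1 : HasDerivAt (fun x : ℝ => (x : ℂ)) 1 x := Complex.ofRealCLM.hasDerivAt
    have h2 := (((h1.div_const c).add_const (1 / c ^ 2)).neg).mul ((h1.const_mul c).neg.cexp)
    refine h2.congr_deriv ?_
    simp only [Pi.neg_apply]
    field_simp
    ring
  have ht : Tendsto (fun x : ℝ => -((x : ℂ) / c + 1 / c ^ 2) * cexp (-(c * x))) atTop (nhds 0) := by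
    have e1 := tendsto_rpow_mul_exp_neg_mul_atTop_nhds_zero 1 c.re hc
    have e0 := tendsto_rpow_mul_exp_neg_mul_atTop_nhds_zero 0 c.re hc
    have e := (e1.mul_const (1 / ‖c‖)).add (e0.mul_const (1 / ‖c‖ ^ 2))
    simp only [zero_mul, add_zero] at e
    refine squeeze_zero_norm' ?_ e
    filter_upwards [eventually_gt_atTop 0] with x hx
    rw [norm_mul, norm_neg, Complex.norm_exp]
    have : ‖(x : ℂ) / c + 1 / c ^ 2‖ ≤ x / ‖c‖ + 1 / ‖c‖ ^ 2 := by
      refine (norm_add_le _ _).trans (le_of_eq ?_)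
      simp [abs_of_pos hx]
    have h3 : (-(c * x)).re = -c.re * x := by simp
    rw [h3]
    refine (mul_le_mul_of_nonneg_right this (Real.exp_pos _).le).trans (le_of_eq ?_)
    rw [Real.rpow_one, Real.rpow_zero]
    ring
  rw [integral_Ioi_of_hasDerivAt_of_tendsto' hd (integrableOn_mul_cexp hc) ht]
  simp

lemma ramp_integrable {a : ℝ} (ha : 0 < a) : Integrable (ramp a) := by
  rw [ramp_eq_indicator, integrable_indicator_iff measurableSet_Ioi]
  exact integrableOn_mul_cexp (c := a) (by simpa using ha)

lemma fourier_ramp {a : ℝ} (ha : 0 < a) (w : ℝ) :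
    𝓕 (ramp a) w = 1 / ((a : ℂ) + Complex.I * (2 * π * w : ℝ)) ^ 2 := by
  rw [Real.fourier_real_eq_integral_exp_smul, ← integral_mul_cexp (by simpa using ha),
    ← integral_indicator measurableSet_Ioi, ramp_eq_indicator]
  congr 1
  funext x
  by_cases hx : 0 < x
  · simp only [indicator, mem_Ioi, hx, if_true, smul_eq_mul]
    rw [mul_left_comm, ← Complex.exp_add]
    congr 2
    push_cast
    ring
  · simp [indicator, hx]

lemma add_I_mul_ne_zero {a : ℝ} (ha : 0 < a) (v : ℝ) : (a : ℂ) + Complex.I * v ≠ 0 := by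
  intro h
  have := congrArg Complex.re h
  simp at this
  exact ha.ne' this

lemma norm_sq_add_I_mul (a v : ℝ) : ‖(a : ℂ) + Complex.I * v‖ ^ 2 = a ^ 2 + v ^ 2 := by
  rw [← Complex.normSq_eq_norm_sq, Complex.normSq_apply]
  simp
  ring

lemma integrable_one_div_sq {a : ℝ} (ha : 0 < a) :
    Integrable (fun v : ℝ => 1 / ((a : ℂ) + Complex.I * v) ^ 2) := by
  have h := ((integrable_inv_one_add_sq.comp_mul_left' (inv_ne_zero ha.ne')).const_mul
    ((a ^ 2)⁻¹))
  refine h.mono' (Continuous.aestronglyMeasurable ?_) (ae_of_all _ fun v => ?_)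
  · exact continuous_const.div (by fun_prop) fun v => pow_ne_zero 2 (add_I_mul_ne_zero ha v)
  · rw [norm_div, norm_pow, norm_sq_add_I_mul, norm_one, ← mul_inv, one_div]
    apply le_of_eq
    congr 1
    field_simp

lemma integral_exp_div_sq {a : ℝ} (ha : 0 < a) (x : ℝ) :
    ∫ v : ℝ, cexp (Complex.I * x * v) / ((a : ℂ) + Complex.I * v) ^ 2 = 2 * π * ramp a x := by
  have hF : 𝓕 (ramp a) = fun w : ℝ => 1 / ((a : ℂ) + Complex.I * (2 * π * w : ℝ)) ^ 2 :=
    funext (fourier_ramp ha)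
  have hi : Integrable (𝓕 (ramp a)) := by
    rw [hF]
    exact (integrable_one_div_sq ha).comp_mul_left' (R := 2 * π) (by positivity)
  have key := congrFun ((ramp_continuous a).fourierInv_fourier_eq (ramp_integrable ha) hi) x
  rw [hF, Real.fourierInv_eq'] at key
  have hs := Measure.integral_comp_mul_left
    (fun v : ℝ => cexp (Complex.I * x * v) / ((a : ℂ) + Complex.I * v) ^ 2) (2 * π)
  have hEq : (∫ v : ℝ, cexp (Complex.I * x * ((2 * π * v : ℝ) : ℂ)) /
      ((a : ℂ) + Complex.I * ((2 * π * v : ℝ) : ℂ)) ^ 2) = ramp a x := by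
    rw [← key]
    congr 1
    funext v
    rw [smul_eq_mul, mul_one_div]
    congr 2
    simp
    ring
  rw [hEq, abs_of_pos (by positivity)] at hs
  rw [hs, Complex.real_smul]
  have : (π : ℂ) ≠ 0 := by exact_mod_cast Real.pi_ne_zero
  push_cast
  field_simp

/-- The limit over `[-T, T]` of the conditionally convergent integral of `exp (ε z) / (z - i u)`
along `z = a + it`, obtained by integrating by parts once. -/
lemma tendsto_exp_div {a : ℝ} (ha : 0 < a) (u ε : ℝ) (hε : ε ≠ 0) :
    Tendsto (fun T : ℝ => ∫ t in (-T)..T,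
        cexp (ε * (a + Complex.I * t)) / ((a : ℂ) + Complex.I * ((t : ℂ) - u)))
      atTop (nhds ((ε : ℂ)⁻¹ * (cexp (ε * (a + Complex.I * u)) * (2 * π * ramp a ε)))) := by
  have hε' : (ε : ℂ) ≠ 0 := by exact_mod_cast hε
  have hw : ∀ t : ℝ, (a : ℂ) + Complex.I * ((t : ℂ) - u) ≠ 0 := fun t => by
    simpa using add_I_mul_ne_zero ha (t - u)
  set B : ℝ → ℂ := fun t => cexp (ε * (a + Complex.I * t)) /
    (ε * Complex.I * ((a : ℂ) + Complex.I * ((t : ℂ) - u))) with hB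
  set g : ℝ → ℂ := fun t => cexp (ε * (a + Complex.I * t)) /
    ((a : ℂ) + Complex.I * ((t : ℂ) - u)) ^ 2 with hg
  have hgc : Continuous g :=
    Continuous.div (by fun_prop) (by fun_prop) fun t => pow_ne_zero 2 (hw t)
  have hfc : Continuous (fun t : ℝ => cexp (ε * (a + Complex.I * t)) /
      ((a : ℂ) + Complex.I * ((t : ℂ) - u))) :=
    Continuous.div (by fun_prop) (by fun_prop) hw
  have hnorm : ∀ t : ℝ, ‖cexp (ε * (a + Complex.I * t))‖ = Real.exp (ε * a) := fun t => by
    rw [Complex.norm_exp]; simp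
  have hgi : Integrable g := by
    have h := (((integrable_one_div_sq ha).comp_sub_right u).norm).const_mul (Real.exp (ε * a))
    refine h.mono' hgc.aestronglyMeasurable (ae_of_all _ fun t => ?_)
    simp only [hg]
    rw [norm_div, hnorm, norm_div, norm_one, mul_one_div]
    simp
  have hgint : ∫ t, g t = cexp (ε * (a + Complex.I * u)) * (2 * π * ramp a ε) := by
    rw [← integral_exp_div_sq ha, ← integral_const_mul, ← integral_add_right_eq_self g u]
    congr 1
    funext v
    simp only [hg]
    rw [← mul_div_assoc, ← Complex.exp_add]
    congr 2
    · push_cast; ring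
    · push_cast; ring
  have hderiv : ∀ t : ℝ, HasDerivAt B (cexp (ε * (a + Complex.I * t)) /
      ((a : ℂ) + Complex.I * ((t : ℂ) - u)) - (ε : ℂ)⁻¹ * g t) t := by
    intro t
    have h1 : HasDerivAt (fun x : ℝ => (x : ℂ)) 1 t := Complex.ofRealCLM.hasDerivAt
    have hn := (((h1.const_mul Complex.I).const_add (a : ℂ)).const_mul (ε : ℂ)).cexp
    have hdn := (((h1.sub_const (u : ℂ)).const_mul Complex.I).const_add (a : ℂ)).const_mul
      ((ε : ℂ) * Complex.I)
    refine (hn.div hdn (mul_ne_zero (mul_ne_zero hε' Complex.I_ne_zero) (hw t))).congr_deriv ?_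
    have := hw t
    have hI := Complex.I_ne_zero
    simp only [hg]
    generalize hW : (a : ℂ) + Complex.I * ((t : ℂ) - u) = W at *
    field_simp
  have hparts : ∀ T : ℝ, ∫ t in (-T)..T,
      cexp (ε * (a + Complex.I * t)) / ((a : ℂ) + Complex.I * ((t : ℂ) - u))
      = (B T - B (-T)) + (ε : ℂ)⁻¹ * ∫ t in (-T)..T, g t := by
    intro T
    have h := intervalIntegral.integral_eq_sub_of_hasDerivAt (a := -T) (b := T)
      (fun t _ => hderiv t)
      ((hfc.sub (continuous_const.mul hgc)).intervalIntegrable _ _)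
    rw [intervalIntegral.integral_sub (hfc.intervalIntegrable _ _)
      (g := fun t => (ε : ℂ)⁻¹ * g t) ((continuous_const.mul hgc).intervalIntegrable _ _),
      intervalIntegral.integral_const_mul] at h
    rw [← h]; ring
  have hB0 : ∀ φ : ℝ → ℝ, Tendsto (fun T => |φ T - u|) atTop atTop →
      Tendsto (fun T => B (φ T)) atTop (nhds 0) := by
    intro φ hφ
    have e := hφ.inv_tendsto_atTop.const_mul (Real.exp (ε * a) / |ε|)
    rw [mul_zero] at e
    refine squeeze_zero_norm' ?_ e
    filter_upwards [hφ.eventually_gt_atTop 0] with T hT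
    simp only [hB]
    rw [norm_div, hnorm, norm_mul, norm_mul, Complex.norm_I, mul_one, Complex.norm_real,
      Real.norm_eq_abs, ← div_div, div_eq_mul_inv (_ / _)]
    refine mul_le_mul_of_nonneg_left ?_ (by positivity)
    refine inv_anti₀ hT ?_
    have h := Complex.abs_im_le_norm ((a : ℂ) + Complex.I * ((φ T : ℂ) - u))
    simpa using h
  have h1 : Tendsto (fun T => B T) atTop (nhds 0) :=
    hB0 (fun T => T) (tendsto_abs_atTop_atTop.comp (tendsto_atTop_add_const_right _ (-u) tendsto_id))
  have h2 : Tendsto (fun T => B (-T)) atTop (nhds 0) :=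
    hB0 (fun T => -T) (tendsto_abs_atBot_atTop.comp
      (tendsto_atBot_add_const_right _ (-u) tendsto_neg_atTop_atBot))
  have h3 := intervalIntegral_tendsto_integral hgi tendsto_neg_atTop_atBot tendsto_id
  simp_rw [hparts]
  rw [← hgint]
  simpa using (h1.sub h2).add (h3.const_mul (ε : ℂ)⁻¹)

/-- Only the half `exp z / 2` of `cosh z` contributes, because `ramp a (-1) = 0`. -/
lemma tendsto_cosh_div {a : ℝ} (ha : 0 < a) (u : ℝ) :
    Tendsto (fun T : ℝ => ∫ t in (-T)..T,
        Complex.cosh ((a : ℂ) + Complex.I * t) / ((a : ℂ) + Complex.I * ((t : ℂ) - u)))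
      atTop (nhds (π * cexp (Complex.I * u))) := by
  have hw : ∀ t : ℝ, (a : ℂ) + Complex.I * ((t : ℂ) - u) ≠ 0 := fun t => by
    simpa using add_I_mul_ne_zero ha (t - u)
  have hc : ∀ ε : ℝ, Continuous (fun t : ℝ => cexp (ε * (a + Complex.I * t)) /
      ((a : ℂ) + Complex.I * ((t : ℂ) - u))) := fun ε =>
    Continuous.div (by fun_prop) (by fun_prop) hw
  have h := ((tendsto_exp_div ha u 1 one_ne_zero).add
    (tendsto_exp_div ha u (-1) (by norm_num))).const_mul (1 / 2 : ℂ)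
  have r1 : ramp a 1 = cexp (-a) := by simp [ramp]
  have r2 : ramp a (-1) = 0 := by simp [ramp]
  rw [r1, r2] at h
  convert h using 1
  · funext T
    rw [← intervalIntegral.integral_add ((hc 1).intervalIntegrable _ _)
      ((hc (-1)).intervalIntegrable _ _), ← intervalIntegral.integral_const_mul]
    congr 1
    funext t
    rw [Complex.cosh]
    simp only [Complex.ofReal_one, Complex.ofReal_neg, one_mul, neg_one_mul]
    ring
  · congr 1
    have e : cexp ((a : ℂ) + Complex.I * u) * cexp (-a) = cexp (Complex.I * u) := by
      rw [← Complex.exp_add]; congr 1; ring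
    rw [← e]
    simp
    ring



/-- The contour-integral reconstruction formula for `cosh` on the imaginary axis:
for `a > 0` and real `t₀`,
`(1/(2π)) ∫_{-∞}^{∞} [cosh(a+it)/(a+i(t-t₀)) + cosh(a-it)/(a-i(t-t₀))] dt = cos t₀`. -/
theorem stmt_4 (a : ℝ) (ha : 0 < a) (t₀ : ℝ) :
    Tendsto (fun T : ℝ => (1 / (2 * (π : ℂ))) *
        ∫ t in (-T)..T,
          (Complex.cosh ((a : ℂ) + Complex.I * t) / ((a : ℂ) + Complex.I * ((t : ℂ) - t₀)) +
           Complex.cosh ((a : ℂ) - Complex.I * t) / ((a : ℂ) - Complex.I * ((t : ℂ) - t₀))))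
      atTop (nhds (Complex.cos (t₀ : ℂ))) := by
  have hw : ∀ u t : ℝ, (a : ℂ) + Complex.I * ((t : ℂ) - u) ≠ 0 := fun u t => by
    simpa using add_I_mul_ne_zero ha (t - u)
  have hc : ∀ u : ℝ, Continuous (fun t : ℝ => Complex.cosh ((a : ℂ) + Complex.I * t) /
      ((a : ℂ) + Complex.I * ((t : ℂ) - u))) := fun u =>
    Continuous.div (by fun_prop) (by fun_prop) (hw u)
  have h := ((tendsto_cosh_div ha t₀).add (tendsto_cosh_div ha (-t₀))).const_mul
    (1 / (2 * (π : ℂ)))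
  -- the second summand is the first one with `t` and `t₀` replaced by their negatives
  have hsec : ∀ t : ℝ, Complex.cosh ((a : ℂ) - Complex.I * t) /
      ((a : ℂ) - Complex.I * ((t : ℂ) - t₀)) =
      Complex.cosh ((a : ℂ) + Complex.I * (-t : ℝ)) /
      ((a : ℂ) + Complex.I * (((-t : ℝ) : ℂ) - (-t₀ : ℝ))) := by
    intro t
    push_cast
    congr 2 <;> ring
  convert h using 1
  · funext T
    simp_rw [hsec]
    rw [intervalIntegral.integral_add ((hc t₀).intervalIntegrable _ _)
      (g := fun t : ℝ => Complex.cosh ((a : ℂ) + Complex.I * (-t : ℝ)) /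
        ((a : ℂ) + Complex.I * (((-t : ℝ) : ℂ) - (-t₀ : ℝ))))
      (((hc (-t₀)).comp continuous_neg).intervalIntegrable _ _),
      intervalIntegral.integral_comp_neg (fun t : ℝ => Complex.cosh ((a : ℂ) + Complex.I * t) /
      ((a : ℂ) + Complex.I * ((t : ℂ) - (-t₀ : ℝ)))), neg_neg]
  · congr 1
    have hpi : (π : ℂ) ≠ 0 := by exact_mod_cast Real.pi_ne_zero
    rw [Complex.cos, mul_comm (t₀ : ℂ) Complex.I,
      show -(t₀ : ℂ) * Complex.I = Complex.I * (-t₀ : ℝ) by push_cast; ring]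
    field_simp
end

section
/- For every real t₀, ξ(1/2 + it₀) = 2 ∑_{n=1}^∞ [ 15πn² e^{-πn²}/(25/4 + t₀²) − (1−2it₀)(πn²)^{−it₀/2}/((5+2it₀) π^{1/4} √n) · Γ(9/4 + it₀/2, πn²) − (1+2it₀)(πn²)^{it₀/2}/((5−2it₀) π^{1/4} √n) · Γ(9/4 − it₀/2, πn²) ], and in particular the right-hand side is real. -/
/-!
Write `s = 1/2 + it`, `a = s/2`, `b = (1-s)/2` and `x = πn²`. Riemann's integral for the completed
zeta function, integrated term by term, gives
`ξ(s) = 1/2 - 2ab ∑ (x^{-a} Γ(a, x) + x^{-b} Γ(b, x))`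
(`completedZeta₀_eq_mellin_thetaTail`, `hasSum_mellin_thetaTail`). Applying
`Γ(z+1, x) = z Γ(z, x) + x^z e^{-x}` (`upperGamma_add_one`) twice turns `Γ(a, x)`, `Γ(b, x)` into
`Γ(9/4 ± it/2, x)`. Since `a + b = 1/2`, the elementary terms this produces are those of
the stated series, up to `(1 - 4x) e^{-x}` in each summand (`xiTerm_eq`). The sum of these corrections is
`-1/2` (`hasSum_theta_deriv`), by the derivative at `1` of the functional equation of theta, and it
cancels the constant `1/2`. Reality holds because each summand is its own complex conjugate
(`conj_xiTerm`).
-/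

open Complex Real

/-- Riemann's xi function `ξ(s) = s(s-1)/2 · π^{-s/2} Γ(s/2) ζ(s)`, extended to an
entire function (via the entire completed zeta `Λ₀`, with `Λ(s) = Λ₀(s) - 1/s - 1/(1-s)`). -/
noncomputable def xiEntire (s : ℂ) : ℂ :=
  s * (s - 1) / 2 * completedRiemannZeta₀ s - (s - 1) / 2 + s / 2

/-- The upper incomplete gamma function `Γ(z, α) = ∫_α^∞ e^{-λ} λ^{z-1} dλ`. -/
noncomputable def upperGamma (z : ℂ) (α : ℝ) : ℂ :=
  ∫ l in Set.Ioi α, (Real.exp (-l) : ℂ) * (l : ℂ) ^ (z - 1)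

/-- The `n`-th term (for `n ≥ 1`) of the series representing `ξ(1/2 + it₀)`. -/
noncomputable def xiTerm (t₀ : ℝ) (n : ℝ) : ℂ :=
  ((15 * π * n ^ 2 * Real.exp (-π * n ^ 2) / (25 / 4 + t₀ ^ 2) : ℝ) : ℂ)
  - (1 - 2 * Complex.I * t₀) * ((π * n ^ 2 : ℝ) : ℂ) ^ (-(Complex.I * t₀) / 2) /
      ((5 + 2 * Complex.I * t₀) * ((π ^ ((1 : ℝ) / 4) : ℝ) : ℂ) * ((Real.sqrt n : ℝ) : ℂ)) *
      upperGamma (9 / 4 + Complex.I * t₀ / 2) (π * n ^ 2)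
  - (1 + 2 * Complex.I * t₀) * ((π * n ^ 2 : ℝ) : ℂ) ^ (Complex.I * t₀ / 2) /
      ((5 - 2 * Complex.I * t₀) * ((π ^ ((1 : ℝ) / 4) : ℝ) : ℂ) * ((Real.sqrt n : ℝ) : ℂ)) *
      upperGamma (9 / 4 - Complex.I * t₀ / 2) (π * n ^ 2)

section

/-! ### The completed zeta function as a Mellin transform -/

open Set MeasureTheory Filter Topology HurwitzZeta

/-- The function `θ(x) - 1 = 2 ∑_{n ≥ 1} exp(-π n² x)` on `x > 1`, extended by `0` to `x ≤ 1`. -/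
noncomputable def thetaTail : ℝ → ℂ :=
  (Ioi 1).indicator fun x ↦ ((evenKernel 0 x - 1 : ℝ) : ℂ)

/-- Riemann's symmetric integral: `Λ₀(s)` is half the Mellin transform at `s / 2` of the theta
function with its polar parts removed, and the part over `x < 1` is folded onto `x > 1` by the
functional equation of theta. -/
lemma completedZeta₀_eq_mellin_thetaTail (s : ℂ) :
    completedRiemannZeta₀ s = (mellin thetaTail (s / 2) + mellin thetaTail ((1 - s) / 2)) / 2 := by
  have hP : ∀ z, MellinConvergent (hurwitzEvenFEPair 0).f_modif z := fun z ↦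
    ((hurwitzEvenFEPair 0).isStrongFEPair_toStrongFEPair.hasMellin z).1
  set f := (hurwitzEvenFEPair 0).f_modif with hf
  have hT : thetaTail = (Ioi 1).indicator f := by
    ext x
    by_cases hx : 1 < x
    · have : ¬ x < 1 := by linarith
      simp [thetaTail, hf, WeakFEPair.f_modif, hurwitzEvenFEPair, hx, this]
    · simp [thetaTail, hx]
  -- The functional equation, read on `x ≤ 1`: at `x = 1` both sides are `0`.
  have hG : ∀ x ∈ Ioi (0:ℝ), (Iic 1).indicator f x = (x : ℂ) ^ (-(1 / 2) : ℂ) • thetaTail x⁻¹ := by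
    intro x hx
    have hx0 : (0:ℝ) < x := hx
    have hfe := (hurwitzEvenFEPair 0).hf_modif_FE x⁻¹ (inv_pos.mpr hx0)
    have hg : (hurwitzEvenFEPair 0).g_modif = f := by
      exact congrArg WeakFEPair.f_modif hurwitzEvenFEPair_zero_symm
    rw [hg] at hfe
    rcases lt_trichotomy x 1 with h1 | rfl | h1
    · have h2 : 1 < x⁻¹ := (one_lt_inv₀ hx0).mpr h1
      rw [indicator_of_mem (by exact h1.le), hT, indicator_of_mem (by exact h2)]
      simp only [one_div, inv_inv] at hfe
      rw [hf, hfe]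
      rw [← hf]
      congr 1
      simp only [hurwitzEvenFEPair, one_mul]
      rw [Real.inv_rpow hx0.le, ← Real.rpow_neg hx0.le, Complex.ofReal_cpow hx0.le]
      push_cast; norm_num
    · simp [hT, hf, WeakFEPair.f_modif]
    · have h2 : ¬ 1 < x⁻¹ := by rw [one_lt_inv₀ hx0]; linarith
      rw [indicator_of_notMem (by simpa using h1), hT, indicator_of_notMem (by exact h2), smul_zero]
  have hsplit : ∀ z, mellin f z = mellin ((Ioi 1).indicator f) z + mellin ((Iic 1).indicator f) z := by
    intro z
    -- Each piece must converge before the Mellin transform can be split.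
    have key : ∀ S : Set ℝ, MeasurableSet S → MellinConvergent (S.indicator f) z := by
      intro S hS
      have := (hP z).indicator hS
      refine this.congr (ae_of_all _ fun x ↦ ?_)
      by_cases hx : x ∈ S <;> simp [hx]
    have := (hasMellin_add (key (Ioi 1) measurableSet_Ioi) (key (Iic 1) measurableSet_Iic)).2
    rw [← this]
    congr 1
    ext x
    rw [← compl_Ioi]
    exact (indicator_self_add_compl_apply _ _ _).symm
  have hG' : mellin ((Iic 1).indicator f) (s / 2) = mellin thetaTail ((1 - s) / 2) := by
    have : mellin ((Iic 1).indicator f) (s / 2) =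
        mellin (fun x ↦ (x : ℂ) ^ (-(1 / 2) : ℂ) • thetaTail x⁻¹) (s / 2) := by
      refine setIntegral_congr_fun measurableSet_Ioi fun x hx ↦ ?_
      simp only [hG x hx]
    rw [this, mellin_cpow_smul, mellin_comp_inv]
    congr 1; ring
  rw [completedRiemannZeta₀, completedHurwitzZetaEven₀, WeakFEPair.Λ₀, ← hf, hsplit, hG', hT]

lemma integral_cpow_mul_exp_Ioi_one (a : ℂ) {c : ℝ} (hc : 0 < c) :
    ∫ t in Ioi (1 : ℝ), (t : ℂ) ^ (a - 1) * (Real.exp (-c * t) : ℂ) =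
      (c : ℂ) ^ (-a) * upperGamma a c := by
  have h := integral_comp_mul_left_Ioi (fun l : ℝ ↦ (Real.exp (-l) : ℂ) * (l : ℂ) ^ (a - 1)) 1 hc
  rw [mul_one] at h
  have hc' : (c : ℂ) ≠ 0 := by exact_mod_cast hc.ne'
  have h2 : ∫ t in Ioi (1 : ℝ), (Real.exp (-(c * t)) : ℂ) * ((c * t : ℝ) : ℂ) ^ (a - 1) =
      (c : ℂ) ^ (a - 1) * ∫ t in Ioi (1 : ℝ), (t : ℂ) ^ (a - 1) * (Real.exp (-c * t) : ℂ) := by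
    rw [← integral_const_mul]
    refine setIntegral_congr_fun measurableSet_Ioi fun t ht ↦ ?_
    have ht0 : (0:ℝ) ≤ t := zero_le_one.trans (le_of_lt ht)
    simp only [Complex.ofReal_mul, Complex.mul_cpow_ofReal_nonneg hc.le ht0, neg_mul]
    ring
  rw [h2] at h
  unfold upperGamma
  rw [Complex.real_smul] at h
  have h3 : (c : ℂ) ^ (a - 1) ≠ 0 := by simp [Complex.cpow_eq_zero_iff, hc']
  apply mul_left_cancel₀ h3
  rw [h, ← mul_assoc, ← Complex.cpow_add _ _ hc', Complex.ofReal_inv,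
    show a - 1 + -a = -1 by ring, Complex.cpow_neg_one]

/-- On `t > 1` the power factor has norm at most `1`, which gives both integrability and a bound
summable over `c = π n²`. -/
lemma norm_cpow_mul_exp_le {a : ℂ} (ha : a.re ≤ 1) (c : ℝ) {t : ℝ} (ht : 1 < t) :
    ‖(t : ℂ) ^ (a - 1) * (Real.exp (-c * t) : ℂ)‖ ≤ Real.exp (-c * t) := by
  rw [norm_mul, Complex.norm_cpow_eq_rpow_re_of_pos (by linarith), Complex.norm_real,
    Real.norm_of_nonneg (Real.exp_pos _).le]
  refine mul_le_of_le_one_left (Real.exp_pos _).le ?_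
  exact Real.rpow_le_one_of_one_le_of_nonpos ht.le (by simpa using ha)

lemma integrableOn_cpow_mul_exp {a : ℂ} (ha : a.re ≤ 1) {c : ℝ} (hc : 0 < c) :
    IntegrableOn (fun t : ℝ ↦ (t : ℂ) ^ (a - 1) * (Real.exp (-c * t) : ℂ)) (Ioi 1) := by
  refine (integrableOn_exp_mul_Ioi (neg_lt_zero.mpr hc) 1).mono' ?_ ?_
  · refine ContinuousOn.aestronglyMeasurable (fun t ht ↦ ?_) measurableSet_Ioi
    have ht0 : (0 : ℝ) < t := zero_lt_one.trans ht
    refine ContinuousAt.continuousWithinAt (ContinuousAt.mul ?_ (by fun_prop))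
    exact Complex.continuousAt_ofReal_cpow_const _ _ (Or.inr ht0.ne')
  · exact (ae_restrict_iff' measurableSet_Ioi).mpr (ae_of_all _ fun t ht ↦ norm_cpow_mul_exp_le ha c ht)

lemma summable_exp_neg_pi_sq : Summable fun n : ℕ ↦ Real.exp (-(π * ((n : ℝ) + 1) ^ 2)) := by
  have := (hasSum_nat_cosKernel₀ 0 one_pos).summable
  have h2 := this.div_const 2
  refine h2.congr fun n ↦ ?_
  simp

/-- Termwise integration of the theta series over `t > 1`. -/
lemma hasSum_mellin_thetaTail {a : ℂ} (ha : a.re ≤ 1) :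
    HasSum (fun n : ℕ ↦ 2 * (((π * ((n : ℝ) + 1) ^ 2 : ℝ) : ℂ) ^ (-a) *
      upperGamma a (π * ((n : ℝ) + 1) ^ 2))) (mellin thetaTail a) := by
  have hpos : ∀ n : ℕ, 1 ≤ π * ((n : ℝ) + 1) ^ 2 := fun n ↦ by
    have : (1:ℝ) ≤ ((n : ℝ) + 1) ^ 2 := one_le_pow₀ (by linarith [n.cast_nonneg (α := ℝ)])
    nlinarith [Real.pi_gt_three]
  have hpos' : ∀ n : ℕ, 0 < π * ((n : ℝ) + 1) ^ 2 := fun n ↦ zero_lt_one.trans_le (hpos n)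
  have main := hasSum_integral_of_summable_integral_norm
    (μ := volume.restrict (Ioi (1 : ℝ)))
    (F := fun (n : ℕ) (t : ℝ) ↦
      (t : ℂ) ^ (a - 1) * (Real.exp (-(π * ((n : ℝ) + 1) ^ 2) * t) : ℂ))
    (fun n ↦ integrableOn_cpow_mul_exp ha (hpos' n)) ?_
  · have h2 := main.mul_left 2
    simp only [integral_cpow_mul_exp_Ioi_one a (hpos' _)] at h2
    suffices hval : mellin thetaTail a = 2 * ∫ t in Ioi (1 : ℝ), ∑' n : ℕ,
        (t : ℂ) ^ (a - 1) * (Real.exp (-(π * ((n : ℝ) + 1) ^ 2) * t) : ℂ) from hval ▸ h2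
    rw [← integral_const_mul]
    unfold mellin
    rw [← integral_indicator measurableSet_Ioi, ← integral_indicator measurableSet_Ioi]
    congr 1
    ext t
    by_cases ht : 1 < t
    · have ht0 : 0 < t := by linarith
      have hk := (hasSum_nat_cosKernel₀ 0 ht0)
      have hk' : HasSum (fun n : ℕ ↦ ((2 * Real.exp (-(π * ((n : ℝ) + 1) ^ 2) * t) : ℝ) : ℂ))
          ((evenKernel 0 t - 1 : ℝ) : ℂ) := by
        rw [hasSum_ofReal, evenKernel_eq_cosKernel_of_zero]
        simpa using hk
      have := (hk'.mul_left ((t : ℂ) ^ (a - 1))).tsum_eq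
      simp only [indicator, mem_Ioi, ht, ht0, if_true, thetaTail, smul_eq_mul]
      rw [← this, ← tsum_mul_left]
      refine tsum_congr fun n ↦ ?_
      push_cast; ring
    · simp [indicator, ht, thetaTail]
  · refine Summable.of_nonneg_of_le (fun n ↦ integral_nonneg fun t ↦ norm_nonneg _) (fun n ↦ ?_)
      summable_exp_neg_pi_sq
    calc _ ≤ ∫ t in Ioi (1:ℝ), Real.exp (-(π * ((n : ℝ) + 1) ^ 2) * t) :=
          setIntegral_mono_on (integrableOn_cpow_mul_exp ha (hpos' n)).norm
            (integrableOn_exp_mul_Ioi (neg_lt_zero.mpr (hpos' n)) 1) measurableSet_Ioi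
            fun t ht ↦ norm_cpow_mul_exp_le ha _ ht
      _ = Real.exp (-(π * ((n : ℝ) + 1) ^ 2)) / (π * ((n : ℝ) + 1) ^ 2) := by
          rw [integral_exp_mul_Ioi (neg_lt_zero.mpr (hpos' n)), mul_one, neg_div_neg_eq]
      _ ≤ _ := div_le_self (Real.exp_pos _).le (hpos n)

/-! ### Incomplete gamma recurrence and the theta derivative at `1` -/

/-- Integration by parts. -/
lemma upperGamma_add_one {z : ℂ} (hz : 0 < z.re) {x : ℝ} (hx : 0 < x) :
    upperGamma (z + 1) x = z * upperGamma z x + (Real.exp (-x) : ℂ) * (x : ℂ) ^ z := by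
  have hint : ∀ {w : ℂ}, 0 < w.re →
      IntegrableOn (fun l : ℝ ↦ (Real.exp (-l) : ℂ) * (l : ℂ) ^ (w - 1)) (Ioi x) := fun hw ↦
    (Complex.GammaIntegral_convergent hw).mono_set (Ioi_subset_Ioi hx.le)
  have h1 := hint (w := z + 1) (by simp; linarith)
  have h0 := (hint hz).const_mul z
  have hderiv : ∀ l : ℝ, 0 < l →
      HasDerivAt (fun l : ℝ ↦ -((Real.exp (-l) : ℂ) * (l : ℂ) ^ z))
        ((Real.exp (-l) : ℂ) * (l : ℂ) ^ (z + 1 - 1) -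
          z * ((Real.exp (-l) : ℂ) * (l : ℂ) ^ (z - 1))) l := by
    intro l hl
    have e1 : HasDerivAt (fun l : ℝ ↦ (Real.exp (-l) : ℂ)) ((-Real.exp (-l) : ℝ) : ℂ) l := by
      have := ((hasDerivAt_neg l).exp).ofReal_comp
      simpa using this
    have e2 : HasDerivAt (fun l : ℝ ↦ (l : ℂ) ^ z) (z * (l : ℂ) ^ (z - 1)) l := by
      have h := HasDerivAt.cpow_const (c := z) (hasDerivAt_id (l : ℂ)) (Or.inl (by simpa using hl))
      simpa using h.comp_ofReal
    refine ((e1.mul e2).neg).congr_deriv ?_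
    push_cast
    rw [add_sub_cancel_right]; ring
  have key := integral_Ioi_of_hasDerivAt_of_tendsto (m := (0 : ℂ))
    (hderiv x hx).continuousAt.continuousWithinAt
    (fun l hl ↦ hderiv l (hx.trans hl)) (h1.sub h0) ?_
  · rw [integral_sub h1 h0, integral_const_mul] at key
    unfold upperGamma
    linear_combination key
  · rw [tendsto_zero_iff_norm_tendsto_zero]
    have := tendsto_rpow_mul_exp_neg_mul_atTop_nhds_zero z.re 1 one_pos
    refine this.congr' ?_
    filter_upwards [eventually_gt_atTop 0] with l hl
    rw [norm_neg, norm_mul, Complex.norm_cpow_eq_rpow_re_of_pos hl, Complex.norm_real,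
      Real.norm_of_nonneg (Real.exp_pos _).le, neg_one_mul, mul_comm]

/-- The theta series may be differentiated term by term at `1`. -/
lemma exists_hasDerivAt_evenKernel_one : ∃ D : ℝ, HasDerivAt (evenKernel 0) D 1 ∧
    HasSum (fun n : ℤ ↦ -(π * (n : ℝ) ^ 2) * Real.exp (-(π * (n : ℝ) ^ 2))) D := by
  have hI : 0 < (Complex.I * ((1 : ℝ) : ℂ)).im := by simp
  have hterm := (hasSum_jacobiTheta₂_term_fderiv 0 hI).mapL
    (ContinuousLinearMap.apply ℂ ℂ ((0, Complex.I) : ℂ × ℂ))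
  have hdiff := (hasFDerivAt_jacobiTheta₂ 0 hI).restrictScalars ℝ
  have hline : HasDerivAt (fun x : ℝ ↦ ((0, Complex.I * (x : ℂ)) : ℂ × ℂ)) (0, Complex.I) 1 := by
    refine (hasDerivAt_const _ _).prodMk ?_
    simpa using ((hasDerivAt_id (1 : ℝ)).ofReal_comp).const_mul Complex.I
  have hcomp := hdiff.comp_hasDerivAt (1 : ℝ) hline
  have hre : HasSum (fun n : ℤ ↦ -(π * (n : ℝ) ^ 2) * Real.exp (-(π * (n : ℝ) ^ 2)))
      (jacobiTheta₂_fderiv 0 (Complex.I * ((1 : ℝ) : ℂ)) (0, Complex.I)).re := by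
    have := Complex.hasSum_re hterm
    refine this.congr_fun fun n ↦ ?_
    have h1 : jacobiTheta₂_term_fderiv n 0 (Complex.I * ((1 : ℝ) : ℂ)) (0, Complex.I) =
        ((-(π * (n : ℝ) ^ 2) * Real.exp (-(π * (n : ℝ) ^ 2)) : ℝ) : ℂ) := by
      have h2 : (2 * π * Complex.I * n * 0 + π * Complex.I * n ^ 2 * (Complex.I * ((1 : ℝ) : ℂ)) : ℂ)
          = ((-(π * (n : ℝ) ^ 2) : ℝ) : ℂ) := by
        push_cast; linear_combination (π * n ^ 2 : ℂ) * Complex.I_sq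
      rw [jacobiTheta₂_term_fderiv, h2, ← Complex.ofReal_exp]
      simp
      linear_combination (Complex.exp (-(π * n ^ 2)) * π * n ^ 2 : ℂ) * Complex.I_sq
    simp only [ContinuousLinearMap.apply_apply]
    rw [h1, Complex.ofReal_re]
  refine ⟨_, ?_, hre⟩
  have hre' := (Complex.reCLM.hasFDerivAt (x := jacobiTheta₂ 0 (Complex.I * ((1 : ℝ) : ℂ)))).comp_hasDerivAt (1 : ℝ) hcomp
  refine hre'.congr_of_eventuallyEq (Eventually.of_forall fun x ↦ ?_)
  have := cosKernel_def 0 x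
  rw [Complex.ofReal_zero] at this
  change _ = (jacobiTheta₂ 0 (Complex.I * x)).re
  rw [← this, evenKernel_eq_cosKernel_of_zero]
  simp

/-- The identity `θ(1) + 4 θ'(1) = 0`, obtained by differentiating `θ(x) = x^{-1/2} θ(1/x)` at
`x = 1`, written as a sum over `n ≥ 1`. -/
lemma hasSum_theta_deriv :
    HasSum (fun n : ℕ ↦ (1 - 4 * (π * ((n : ℝ) + 1) ^ 2)) * Real.exp (-(π * ((n : ℝ) + 1) ^ 2)))
      (-1 / 2) := by
  obtain ⟨D, hD, hsum⟩ := exists_hasDerivAt_evenKernel_one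
  have hfe : D = -(1 / 2) * evenKernel 0 1 - D := by
    have h1 : HasDerivAt (fun x : ℝ ↦ x ^ (-(1 / 2) : ℝ) * evenKernel 0 (x⁻¹))
        (-(1 / 2) * evenKernel 0 1 - D) 1 := by
      have e1 : HasDerivAt (fun x : ℝ ↦ x ^ (-(1 / 2) : ℝ)) (-(1 / 2)) 1 := by
        simpa using Real.hasDerivAt_rpow_const (x := 1) (p := -(1 / 2)) (Or.inl one_ne_zero)
      have e2 : HasDerivAt (fun x : ℝ ↦ evenKernel 0 (x⁻¹)) (D * (-1)) 1 := by
        refine HasDerivAt.comp_of_eq (1 : ℝ) hD ?_ (by simp)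
        simpa using hasDerivAt_inv (one_ne_zero (α := ℝ))
      refine (e1.mul e2).congr_deriv ?_
      simp; ring
    refine hD.unique (h1.congr_of_eventuallyEq ?_)
    filter_upwards [lt_mem_nhds (zero_lt_one (α := ℝ))] with x hx
    rw [evenKernel_functional_equation, evenKernel_eq_cosKernel_of_zero, Real.rpow_neg hx.le, one_div x,
      one_div (x ^ _)]
  have hE : HasSum (fun n : ℤ ↦ Real.exp (-(π * (n : ℝ) ^ 2))) (evenKernel 0 1) := by
    simpa using hasSum_int_evenKernel 0 one_pos
  have hall : HasSum (fun n : ℤ ↦ (1 - 4 * (π * (n : ℝ) ^ 2)) * Real.exp (-(π * (n : ℝ) ^ 2))) 0 := by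
    have h := hE.add (hsum.mul_left 4)
    rw [show evenKernel 0 1 + 4 * D = 0 by linarith] at h
    exact h.congr_fun fun n ↦ by ring
  have h2 := hall.nat_add_neg
  rw [← hasSum_nat_add_iff' 1] at h2
  have h3 := h2.div_const 2
  have hval : ((0 : ℝ) + (1 - 4 * (π * ((0 : ℤ) : ℝ) ^ 2)) * Real.exp (-(π * ((0 : ℤ) : ℝ) ^ 2)) -
      ∑ i ∈ Finset.range 1,
        ((1 - 4 * (π * (((i : ℕ) : ℤ) : ℝ) ^ 2)) * Real.exp (-(π * (((i : ℕ) : ℤ) : ℝ) ^ 2)) +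
          (1 - 4 * (π * ((-((i : ℕ) : ℤ) : ℤ) : ℝ) ^ 2)) *
            Real.exp (-(π * ((-((i : ℕ) : ℤ) : ℤ) : ℝ) ^ 2)))) / 2 = -1 / 2 := by
    simp
  rw [hval] at h3
  refine h3.congr_fun fun n ↦ ?_
  push_cast
  rw [neg_sq]
  ring

/-! ### Comparison of the two series -/

/-- The algebra behind `xiTerm_eq`, with `a = s / 2`, `b = (1 - s) / 2`, `x = π n²`, `e = exp(-x)`,
`r = x^{1/4}`, `p = x^{-it/2}`, `q = x^{it/2}`, `g = Γ(a, x)` and `g' = Γ(b, x)`; the inner brackets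
are `Γ(a + 2, x)` and `Γ(b + 2, x)` after two steps of the recurrence. -/
lemma term_identity {a b p q r x e g g' : ℂ} (hab : a + b = 1 / 2) (hpq : p * q = 1) (hr : r ≠ 0)
    (ha : a + 1 ≠ 0) (hb : b + 1 ≠ 0) :
    15 * x * e / (4 * (a + 1) * (b + 1))
      - b * p / ((a + 1) * r) * ((a + 1) * (a * g + e * (q * r)) + e * (x * (q * r)))
      - a * q / ((b + 1) * r) * ((b + 1) * (b * g' + e * (p * r)) + e * (x * (p * r))) =
    (-(a * b) * (2 * (p / r * g) + 2 * (q / r * g')) - (1 - 4 * x) * e) / 2 := by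
  have hq : q ≠ 0 := right_ne_zero_of_mul_eq_one hpq
  obtain rfl : p = 1 / q := by field_simp; exact hpq
  field_simp
  obtain rfl : b = 1 / 2 - a := by linear_combination hab
  ring

/-- The summand equals the `n`-th term of the classical series for `ξ / 2` minus half the `n`-th
term of the series in `hasSum_theta_deriv`. -/
lemma xiTerm_eq (t : ℝ) {n : ℝ} (hn : 0 < n) :
    xiTerm t n =
      (-((1 / 4 + Complex.I * t / 2) * (1 / 4 - Complex.I * t / 2)) *
        (2 * (((π * n ^ 2 : ℝ) : ℂ) ^ (-(1 / 4 + Complex.I * t / 2)) *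
            upperGamma (1 / 4 + Complex.I * t / 2) (π * n ^ 2)) +
          2 * (((π * n ^ 2 : ℝ) : ℂ) ^ (-(1 / 4 - Complex.I * t / 2)) *
            upperGamma (1 / 4 - Complex.I * t / 2) (π * n ^ 2))) -
        (((1 - 4 * (π * n ^ 2)) * Real.exp (-(π * n ^ 2)) : ℝ) : ℂ)) / 2 := by
  have hx : 0 < π * n ^ 2 := by positivity
  set a : ℂ := 1 / 4 + Complex.I * t / 2 with ha
  set b : ℂ := 1 / 4 - Complex.I * t / 2 with hb
  have hare : a.re = 1 / 4 := by simp [ha]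
  have hbre : b.re = 1 / 4 := by simp [hb]
  have ha1 : a + 1 ≠ 0 := fun h ↦ by
    have := congrArg Complex.re h
    rw [Complex.add_re, hare] at this; norm_num at this
  have hb1 : b + 1 ≠ 0 := fun h ↦ by
    have := congrArg Complex.re h
    rw [Complex.add_re, hbre] at this; norm_num at this
  have hΓ : ∀ z : ℂ, z.re = 1 / 4 → upperGamma (z + 1 + 1) (π * n ^ 2) =
      (z + 1) * (z * upperGamma z (π * n ^ 2) + (Real.exp (-(π * n ^ 2)) : ℂ) *
        ((π * n ^ 2 : ℝ) : ℂ) ^ z) + (Real.exp (-(π * n ^ 2)) : ℂ) *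
        ((π * n ^ 2 : ℝ) : ℂ) ^ (z + 1) := by
    intro z hz
    rw [upperGamma_add_one (by simp [hz]; norm_num) hx, upperGamma_add_one (by rw [hz]; norm_num) hx]
  have hroot : ((π ^ ((1 : ℝ) / 4) : ℝ) : ℂ) * ((Real.sqrt n : ℝ) : ℂ) =
      ((π * n ^ 2 : ℝ) : ℂ) ^ (1 / 4 : ℂ) := by
    have : ((π * n ^ 2) ^ ((1 : ℝ) / 4) : ℝ) = π ^ ((1 : ℝ) / 4) * Real.sqrt n := by
      rw [Real.mul_rpow Real.pi_pos.le (by positivity), ← Real.rpow_natCast n 2,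
        ← Real.rpow_mul hn.le, Real.sqrt_eq_rpow]
      norm_num
    rw [← Complex.ofReal_mul, ← this, Complex.ofReal_cpow hx.le]
    norm_num
  unfold xiTerm
  rw [show (9 / 4 + Complex.I * t / 2 : ℂ) = a + 1 + 1 by rw [ha]; ring,
    show (9 / 4 - Complex.I * t / 2 : ℂ) = b + 1 + 1 by rw [hb]; ring, hΓ a hare, hΓ b hbre,
    mul_assoc (5 + 2 * Complex.I * (t : ℂ)), mul_assoc (5 - 2 * Complex.I * (t : ℂ)), hroot]
  set X : ℂ := ((π * n ^ 2 : ℝ) : ℂ) with hX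
  have hX0 : X ≠ 0 := by rw [hX]; exact_mod_cast hx.ne'
  have hpq : X ^ (-(Complex.I * t) / 2) * X ^ (Complex.I * t / 2) = 1 := by
    rw [← Complex.cpow_add _ _ hX0, neg_div, neg_add_cancel, Complex.cpow_zero]
  have hr : X ^ (1 / 4 : ℂ) ≠ 0 := by simp [Complex.cpow_eq_zero_iff, hX0]
  have e1 : X ^ a = X ^ (Complex.I * t / 2) * X ^ (1 / 4 : ℂ) := by
    rw [← Complex.cpow_add _ _ hX0, ha, add_comm]
  have e2 : X ^ b = X ^ (-(Complex.I * t) / 2) * X ^ (1 / 4 : ℂ) := by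
    rw [← Complex.cpow_add _ _ hX0, hb]; congr 1; ring
  have e3 : X ^ (-a) = X ^ (-(Complex.I * t) / 2) / X ^ (1 / 4 : ℂ) := by
    rw [← Complex.cpow_sub _ _ hX0, ha]; congr 1; ring
  have e4 : X ^ (-b) = X ^ (Complex.I * t / 2) / X ^ (1 / 4 : ℂ) := by
    rw [← Complex.cpow_sub _ _ hX0, hb]; congr 1; ring
  have e5 : X ^ (a + 1) = X * (X ^ (Complex.I * t / 2) * X ^ (1 / 4 : ℂ)) := by
    rw [Complex.cpow_add _ _ hX0, Complex.cpow_one, e1, mul_comm]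
  have e6 : X ^ (b + 1) = X * (X ^ (-(Complex.I * t) / 2) * X ^ (1 / 4 : ℂ)) := by
    rw [Complex.cpow_add _ _ hX0, Complex.cpow_one, e2, mul_comm]
  rw [e1, e2, e3, e4, e5, e6]
  have key := term_identity (x := X) (e := (Real.exp (-(π * n ^ 2)) : ℂ))
    (g := upperGamma a (π * n ^ 2)) (g' := upperGamma b (π * n ^ 2))
    (show a + b = 1 / 2 by rw [ha, hb]; ring) hpq hr ha1 hb1
  have c1 : ((15 * π * n ^ 2 * Real.exp (-π * n ^ 2) / (25 / 4 + t ^ 2) : ℝ) : ℂ) =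
      15 * X * (Real.exp (-(π * n ^ 2)) : ℂ) / (4 * (a + 1) * (b + 1)) := by
    have : 4 * (a + 1) * (b + 1) = ((25 / 4 + t ^ 2 : ℝ) : ℂ) := by
      rw [ha, hb]; push_cast; linear_combination (-(t : ℂ) ^ 2) * Complex.I_sq
    rw [this, hX, neg_mul]
    push_cast; ring
  have c2 : (((1 - 4 * (π * n ^ 2)) * Real.exp (-(π * n ^ 2)) : ℝ) : ℂ) =
      (1 - 4 * X) * (Real.exp (-(π * n ^ 2)) : ℂ) := by rw [hX]; push_cast; ring
  rw [c1, c2, ← key, show (1 - 2 * Complex.I * t : ℂ) = 4 * b by rw [hb]; ring,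
    show (1 + 2 * Complex.I * t : ℂ) = 4 * a by rw [ha]; ring,
    show (5 + 2 * Complex.I * t : ℂ) = 4 * (a + 1) by rw [ha]; ring,
    show (5 - 2 * Complex.I * t : ℂ) = 4 * (b + 1) by rw [hb]; ring]
  have h4 : (4 : ℂ) ≠ 0 := by norm_num
  simp only [mul_assoc (4 : ℂ), mul_div_mul_left _ _ h4]

lemma hasSum_xiTerm (t : ℝ) :
    HasSum (fun n : ℕ ↦ xiTerm t ((n : ℝ) + 1)) (xiEntire (1 / 2 + Complex.I * t) / 2) := by
  have hA := hasSum_mellin_thetaTail (a := 1 / 4 + Complex.I * t / 2) (by simp; norm_num)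
  have hB := hasSum_mellin_thetaTail (a := 1 / 4 - Complex.I * t / 2) (by simp; norm_num)
  have hT := Complex.hasSum_ofReal.mpr hasSum_theta_deriv
  have h := (((hA.add hB).mul_left
    (-((1 / 4 + Complex.I * t / 2) * (1 / 4 - Complex.I * t / 2)))).sub hT).div_const 2
  have hval : xiEntire (1 / 2 + Complex.I * t) / 2 =
      (-((1 / 4 + Complex.I * t / 2) * (1 / 4 - Complex.I * t / 2)) *
        (mellin thetaTail (1 / 4 + Complex.I * t / 2) +
          mellin thetaTail (1 / 4 - Complex.I * t / 2)) - ((-1 / 2 : ℝ) : ℂ)) / 2 := by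
    rw [xiEntire, completedZeta₀_eq_mellin_thetaTail,
      show (1 / 2 + Complex.I * t) / 2 = 1 / 4 + Complex.I * t / 2 by ring,
      show (1 - (1 / 2 + Complex.I * t)) / 2 = 1 / 4 - Complex.I * t / 2 by ring]
    push_cast
    ring
  rw [hval]
  exact h.congr_fun fun n ↦ xiTerm_eq t (by positivity)

lemma conj_ofReal_cpow {x : ℝ} (hx : 0 < x) (z : ℂ) :
    (starRingEnd ℂ) ((x : ℂ) ^ z) = (x : ℂ) ^ (starRingEnd ℂ) z := by
  have := Complex.conj_cpow (x : ℂ) ((starRingEnd ℂ) z)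
    (by rw [Complex.arg_ofReal_of_nonneg hx.le]; exact Real.pi_pos.ne)
  simpa using this.symm

lemma conj_upperGamma (z : ℂ) {x : ℝ} (hx : 0 < x) :
    (starRingEnd ℂ) (upperGamma z x) = upperGamma ((starRingEnd ℂ) z) x := by
  unfold upperGamma
  rw [← integral_conj]
  refine setIntegral_congr_fun measurableSet_Ioi fun l hl ↦ ?_
  simp only [map_mul, Complex.conj_ofReal, conj_ofReal_cpow (hx.trans hl), map_sub, map_one]

/-- Conjugation exchanges the two incomplete gamma terms and fixes the first term. -/
lemma conj_xiTerm (t : ℝ) {n : ℝ} (hn : 0 < n) :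
    (starRingEnd ℂ) (xiTerm t n) = xiTerm t n := by
  have hx : 0 < π * n ^ 2 := by positivity
  unfold xiTerm
  simp only [map_sub, map_add, map_mul, map_div₀, conj_upperGamma _ hx, conj_ofReal_cpow hx,
    Complex.conj_ofReal, Complex.conj_I, map_neg, map_one, map_ofNat]
  ring_nf

end

/-- The series formula for `ξ` on the critical line: for every real `t₀`,
`ξ(1/2 + it₀) = 2 ∑_{n=1}^∞ [15πn²e^{-πn²}/(25/4+t₀²)
  − (1−2it₀)(πn²)^{−it₀/2}/((5+2it₀)π^{1/4}√n) · Γ(9/4+it₀/2, πn²)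
  − (1+2it₀)(πn²)^{it₀/2}/((5−2it₀)π^{1/4}√n) · Γ(9/4−it₀/2, πn²)]`,
and the right-hand side is real. -/
theorem stmt_19 (t₀ : ℝ) :
    xiEntire (1 / 2 + Complex.I * t₀) = 2 * ∑' n : ℕ, xiTerm t₀ ((n : ℝ) + 1) ∧
      (2 * ∑' n : ℕ, xiTerm t₀ ((n : ℝ) + 1)).im = 0 := by
  have h := hasSum_xiTerm t₀
  refine ⟨by rw [h.tsum_eq]; ring, ?_⟩
  rw [← Complex.conj_eq_iff_im, map_mul, Complex.conj_tsum, map_ofNat]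
  congr 1
  exact tsum_congr fun n ↦ conj_xiTerm t₀ (by positivity)
end
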